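/- arXiv:2603.27458 — 7 statements merged into one kernel-verified Lean document; each statement's English description precedes it below -/
import Mathlib

section
/- Let C be a bivariate copula and define the reflected copulas C*(u,v) = u + v − 1 + C(1−u, 1−v), C¹*(u,v) = v − C(1−u, v), and C²*(u,v) = u − C(u, 1−v). Assume that for every u ∈ (0,1), the maps v ↦ C(u,v) and v ↦ v − C(u,v) are continuous and strictly increasing on [0,1]. Then for all p, q ∈ (0,1): v(q|p; C) = 1 − v(1−q | p; C²*) and v(q|p; C*) = 1 − v(1−q | p; C¹*). -/
open Set Filter Topology

/-- A bivariate copula: `C : [0,1]² → [0,1]` with the boundary conditions and the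
2-increasing property. -/
def IsCopula (C : ℝ → ℝ → ℝ) : Prop :=
  (∀ u ∈ Icc (0:ℝ) 1, ∀ v ∈ Icc (0:ℝ) 1, C u v ∈ Icc (0:ℝ) 1) ∧
  (∀ u ∈ Icc (0:ℝ) 1, C u 0 = 0) ∧
  (∀ v ∈ Icc (0:ℝ) 1, C 0 v = 0) ∧
  (∀ u ∈ Icc (0:ℝ) 1, C u 1 = u) ∧
  (∀ v ∈ Icc (0:ℝ) 1, C 1 v = v) ∧
  (∀ u₁ u₂ v₁ v₂ : ℝ, u₁ ∈ Icc (0:ℝ) 1 → u₂ ∈ Icc (0:ℝ) 1 → v₁ ∈ Icc (0:ℝ) 1 →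
    v₂ ∈ Icc (0:ℝ) 1 → u₁ ≤ u₂ → v₁ ≤ v₂ →
    0 ≤ C u₂ v₂ - C u₂ v₁ - C u₁ v₂ + C u₁ v₁)

/-- The copula-adjusted probability level `v(q|p;C) = inf{v ∈ [0,1] : C(p,v)/p ≥ q}`. -/
noncomputable def vLevel (C : ℝ → ℝ → ℝ) (p q : ℝ) : ℝ :=
  sInf {v ∈ Icc (0:ℝ) 1 | q ≤ C p v / p}

/- A strictly increasing section of `C` splits `[0, 1]` at the level `q` into a lower and an upper
part meeting in a single cut, so the infimum defining `vLevel C p q` is also the supremum of the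
lower part. The reflection `v ↦ 1 - v` turns that supremum into the infimum defining the level of
the reflected copula. -/

theorem csInf_superlevel_eq_csSup_sublevel {α β : Type*} [ConditionallyCompleteLinearOrder α]
    [DenselyOrdered α] [LinearOrder β] {s : Set α} [s.OrdConnected] {f : α → β}
    (hf : StrictMonoOn f s) {c : β} (hlower : {x ∈ s | f x ≤ c}.Nonempty)
    (hupper : {x ∈ s | c ≤ f x}.Nonempty) :
    sInf {x ∈ s | c ≤ f x} = sSup {x ∈ s | f x ≤ c} := by
  have lower_le_upper : ∀ x ∈ {x ∈ s | f x ≤ c}, ∀ y ∈ {x ∈ s | c ≤ f x}, x ≤ y :=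
    fun x hx y hy ↦ (hf.le_iff_le hx.1 hy.1).1 (hx.2.trans hy.2)
  obtain ⟨a, ha⟩ := hlower
  obtain ⟨b, hb⟩ := hupper
  have hbdd_lower : BddAbove {x ∈ s | f x ≤ c} := ⟨b, fun x hx ↦ lower_le_upper x hx b hb⟩
  have hbdd_upper : BddBelow {x ∈ s | c ≤ f x} := ⟨a, lower_le_upper a ha⟩
  apply le_antisymm
  · refine le_of_forall_gt_imp_ge_of_dense fun x hx ↦ ?_
    by_contra! hx'
    have hxs : x ∈ s := OrdConnected.out' ha.1 hb.1
      ⟨(le_csSup hbdd_lower ha).trans hx.le, hx'.le.trans (csInf_le hbdd_upper hb)⟩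
    rcases le_total (f x) c with hlow | hup
    · exact hx.not_ge (le_csSup hbdd_lower ⟨hxs, hlow⟩)
    · exact hx'.not_ge (csInf_le hbdd_upper ⟨hxs, hup⟩)
  · exact csSup_le ⟨a, ha⟩ fun x hx ↦ le_csInf ⟨b, hb⟩ (lower_le_upper x hx)

theorem csInf_image_const_sub {α : Type*} [AddGroup α] [ConditionallyCompleteLattice α]
    [AddLeftMono α] [AddRightMono α] (a : α) {s : Set α} (hne : s.Nonempty) (hbdd : BddAbove s) :
    sInf ((a - ·) '' s) = a - sSup s :=
  ((OrderIso.subLeft a).map_csSup' hne hbdd).symm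

theorem vLevel_eq_csSup {C : ℝ → ℝ → ℝ} {p q : ℝ} (hp : 0 < p)
    (hmono : StrictMonoOn (C p) (Icc 0 1)) (hlower : C p 0 / p ≤ q) (hupper : q ≤ C p 1 / p) :
    vLevel C p q = sSup {v ∈ Icc (0 : ℝ) 1 | C p v / p ≤ q} :=
  csInf_superlevel_eq_csSup_sublevel
    (fun _ ha _ hb hab ↦ div_lt_div_of_pos_right (hmono ha hb hab) hp)
    ⟨0, unitInterval.zero_mem, hlower⟩ ⟨1, unitInterval.one_mem, hupper⟩

theorem superlevel_eq_image_one_sub_sublevel {C D : ℝ → ℝ → ℝ} {p : ℝ} (hp : p ≠ 0)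
    (hadd : ∀ v ∈ Icc (0 : ℝ) 1, C p v + D p (1 - v) = p) (q : ℝ) :
    {v ∈ Icc (0 : ℝ) 1 | 1 - q ≤ D p v / p} =
      (1 - ·) '' {v ∈ Icc (0 : ℝ) 1 | C p v / p ≤ q} := by
  have level_iff : ∀ v ∈ Icc (0 : ℝ) 1, 1 - q ≤ D p (1 - v) / p ↔ C p v / p ≤ q := by
    intro v hv
    rw [eq_sub_of_add_eq' (hadd v hv), sub_div, div_self hp, sub_le_sub_iff_left]
  ext v
  constructor
  · rintro ⟨hv, hle⟩
    have hv' : 1 - v ∈ Icc (0 : ℝ) 1 := Icc.one_sub_mem hv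
    exact ⟨1 - v, ⟨hv', (level_iff _ hv').1 (by rwa [sub_sub_cancel])⟩, sub_sub_cancel 1 v⟩
  · rintro ⟨w, ⟨hw, hle⟩, rfl⟩
    exact ⟨Icc.one_sub_mem hw, (level_iff w hw).2 hle⟩

theorem vLevel_eq_one_sub_vLevel {C D : ℝ → ℝ → ℝ} {p q : ℝ} (hp : 0 < p) (hq : q ∈ Icc (0 : ℝ) 1)
    (hzero : C p 0 = 0) (hone : C p 1 = p) (hmono : StrictMonoOn (C p) (Icc 0 1))
    (hadd : ∀ v ∈ Icc (0 : ℝ) 1, C p v + D p (1 - v) = p) :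
    vLevel C p q = 1 - vLevel D p (1 - q) := by
  have hlower : C p 0 / p ≤ q := by simpa only [hzero, zero_div] using hq.1
  have hupper : q ≤ C p 1 / p := by simpa only [hone, div_self hp.ne'] using hq.2
  have hreflect : vLevel D p (1 - q) = 1 - sSup {v ∈ Icc (0 : ℝ) 1 | C p v / p ≤ q} := by
    rw [vLevel, superlevel_eq_image_one_sub_sublevel hp.ne' hadd]
    exact csInf_image_const_sub 1 ⟨0, unitInterval.zero_mem, hlower⟩ ⟨1, fun _ hv ↦ hv.1.2⟩
  rw [hreflect, sub_sub_cancel, vLevel_eq_csSup hp hmono hlower hupper]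

theorem vLevel_reflection_general {C : ℝ → ℝ → ℝ} {p q : ℝ} (hp : 0 < p) (hq : q ∈ Icc (0 : ℝ) 1)
    (hzero : C p 0 = 0) (hone : C p 1 = p) (hmono : StrictMonoOn (C p) (Icc 0 1))
    (hzero' : C (1 - p) 0 = 0) (hone' : C (1 - p) 1 = 1 - p)
    (hmono' : StrictMonoOn (fun v ↦ v - C (1 - p) v) (Icc 0 1)) :
    vLevel C p q = 1 - vLevel (fun u v ↦ u - C u (1 - v)) p (1 - q) ∧
    vLevel (fun u v ↦ u + v - 1 + C (1 - u) (1 - v)) p q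
      = 1 - vLevel (fun u v ↦ v - C (1 - u) v) p (1 - q) := by
  constructor
  · exact vLevel_eq_one_sub_vLevel hp hq hzero hone hmono fun v _ ↦ by
      rw [sub_sub_cancel, add_sub_cancel]
  · have hreflect : vLevel (fun u v ↦ v - C (1 - u) v) p (1 - q) =
        1 - vLevel (fun u v ↦ u + v - 1 + C (1 - u) (1 - v)) p (1 - (1 - q)) :=
      vLevel_eq_one_sub_vLevel hp (Icc.one_sub_mem hq) (by simp [hzero'])
        (by simp [hone']) hmono' fun v _ ↦ by rw [sub_sub_cancel]; ring
    rw [hreflect, sub_sub_cancel, sub_sub_cancel]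

/-- Reflection identities for the copula-adjusted probability level:
`v(q|p;C) = 1 − v(1−q|p;C²*)` and `v(q|p;C*) = 1 − v(1−q|p;C¹*)`, where
`C*(u,v) = u+v−1+C(1−u,1−v)`, `C¹*(u,v) = v−C(1−u,v)`, `C²*(u,v) = u−C(u,1−v)`. -/
theorem vLevel_reflection (C : ℝ → ℝ → ℝ) (hC : IsCopula C)
    (hmono : ∀ u ∈ Ioo (0:ℝ) 1,
      ContinuousOn (fun v => C u v) (Icc 0 1) ∧
      StrictMonoOn (fun v => C u v) (Icc 0 1) ∧
      ContinuousOn (fun v => v - C u v) (Icc 0 1) ∧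
      StrictMonoOn (fun v => v - C u v) (Icc 0 1))
    (p q : ℝ) (hp : p ∈ Ioo (0:ℝ) 1) (hq : q ∈ Ioo (0:ℝ) 1) :
    vLevel C p q = 1 - vLevel (fun u v => u - C u (1 - v)) p (1 - q) ∧
    vLevel (fun u v => u + v - 1 + C (1 - u) (1 - v)) p q
      = 1 - vLevel (fun u v => v - C (1 - u) v) p (1 - q) := by
  obtain ⟨-, hzero, -, hone, -, -⟩ := hC
  have hp' : 1 - p ∈ Ioo (0 : ℝ) 1 := Ioo.one_sub_mem hp
  have hpI := Ioo_subset_Icc_self hp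
  have hpI' := Ioo_subset_Icc_self hp'
  exact vLevel_reflection_general hp.1 (Ioo_subset_Icc_self hq) (hzero p hpI) (hone p hpI)
    (hmono p hp).2.1 (hzero _ hpI') (hone _ hpI') (hmono _ hp').2.2.2
end

section
/- Let C be a bivariate copula, C⁺(u,v) = min(u,v), C⊥(u,v) = uv, C⁻(u,v) = max(u+v−1, 0), and let p, q ∈ (0,1). If C⊥(u,v) ≤ C(u,v) ≤ C⁺(u,v) for all (u,v) ∈ [0,1]², then p·q ≤ v(q|p; C) ≤ q. If C⁻(u,v) ≤ C(u,v) ≤ C⊥(u,v) for all (u,v) ∈ [0,1]², then q ≤ v(q|p; C) ≤ 1 − (1−q)·p. -/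
open Set Filter Topology

/-!
The level `v(q|p; C)` sees only the section `C(p, ·)`, and a pointwise larger section reaches the
height `q * p` earlier, so `v(q|p; ·)` reverses the pointwise order. All four bounds are therefore
the values of the level at the reference copulas: `p * q` at `C⁺`, `q` at `C⊥` and
`1 - (1 - q) * p` at `C⁻`.
-/

/-- The comonotone copula `C⁺` (upper Fréchet–Hoeffding bound), the reference model
of perfect positive dependence. As in `IsCopula`, only its values on `[0,1]²` are meaningful. -/
def comonotoneCopula (u v : ℝ) : ℝ := min u v

/-- The independence copula `C⊥`, which separates positive from negative dependence. As in
`IsCopula`, only its values on `[0,1]²` are meaningful. -/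
def independenceCopula (u v : ℝ) : ℝ := u * v

/-- The countermonotone copula `C⁻` (lower Fréchet–Hoeffding bound), the reference model
of perfect negative dependence. As in `IsCopula`, only its values on `[0,1]²` are meaningful. -/
def countermonotoneCopula (u v : ℝ) : ℝ := max (u + v - 1) 0

section Level

variable {C D : ℝ → ℝ → ℝ} {p q b : ℝ}

theorem vLevel_le_vLevel (hp : 0 < p) (hq : q ≤ 1) (hC : p ≤ C p 1)
    (hCD : ∀ v ∈ Icc (0 : ℝ) 1, C p v ≤ D p v) : vLevel D p q ≤ vLevel C p q := by
  have one_mem : (1 : ℝ) ∈ {v ∈ Icc (0 : ℝ) 1 | q ≤ C p v / p} :=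
    ⟨right_mem_Icc.2 zero_le_one, hq.trans ((one_le_div hp).2 hC)⟩
  exact csInf_le_csInf ⟨0, fun v hv ↦ hv.1.1⟩ ⟨1, one_mem⟩ fun v ⟨hv, hqv⟩ ↦
    ⟨hv, hqv.trans (div_le_div_of_nonneg_right (hCD v hv) hp.le)⟩

theorem vLevel_eq_of_mul_le_iff (hp : 0 < p) (hb : b ∈ Icc (0 : ℝ) 1)
    (h : ∀ v ∈ Icc (0 : ℝ) 1, q * p ≤ C p v ↔ b ≤ v) : vLevel C p q = b :=
  IsLeast.csInf_eq
    ⟨⟨hb, (le_div_iff₀ hp).2 ((h b hb).2 le_rfl)⟩,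
      fun v ⟨hv, hqv⟩ ↦ (h v hv).1 ((le_div_iff₀ hp).1 hqv)⟩

theorem vLevel_comonotoneCopula (hp : p ∈ Ioc (0 : ℝ) 1) (hq : q ∈ Icc (0 : ℝ) 1) :
    vLevel comonotoneCopula p q = p * q := by
  refine vLevel_eq_of_mul_le_iff hp.1
    ⟨mul_nonneg hp.1.le hq.1, mul_le_one₀ hp.2 hq.1 hq.2⟩ fun v _ ↦ ?_
  have mul_le_left : q * p ≤ p := mul_le_of_le_one_left hp.1.le hq.2
  rw [comonotoneCopula, le_min_iff, and_iff_right mul_le_left, mul_comm]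

theorem vLevel_independenceCopula (hp : 0 < p) (hq : q ∈ Icc (0 : ℝ) 1) :
    vLevel independenceCopula p q = q :=
  vLevel_eq_of_mul_le_iff hp hq fun v _ ↦ by
    rw [independenceCopula, mul_comm, mul_le_mul_iff_right₀ hp]

theorem vLevel_countermonotoneCopula (hp : p ∈ Ioc (0 : ℝ) 1) (hq : q ∈ Ioc (0 : ℝ) 1) :
    vLevel countermonotoneCopula p q = 1 - (1 - q) * p := by
  have one_sub_mul_nonneg : 0 ≤ (1 - q) * p := mul_nonneg (sub_nonneg.2 hq.2) hp.1.le
  have one_sub_mul_le_one : (1 - q) * p ≤ 1 := mul_le_one₀ (sub_le_self 1 hq.1.le) hp.1.le hp.2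
  refine vLevel_eq_of_mul_le_iff hp.1
    ⟨sub_nonneg.2 one_sub_mul_le_one, sub_le_self 1 one_sub_mul_nonneg⟩ fun v _ ↦ ?_
  have not_le_zero : ¬q * p ≤ 0 := (mul_pos hq.1 hp.1).not_ge
  rw [countermonotoneCopula, le_max_iff, or_iff_left not_le_zero]
  constructor <;> intro h <;> linarith

theorem vLevel_range_bounds_general (hp : p ∈ Ioc (0 : ℝ) 1) (hq : q ∈ Ioc (0 : ℝ) 1) :
    ((∀ v ∈ Icc (0 : ℝ) 1, independenceCopula p v ≤ C p v ∧ C p v ≤ comonotoneCopula p v) →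
      p * q ≤ vLevel C p q ∧ vLevel C p q ≤ q) ∧
    ((∀ v ∈ Icc (0 : ℝ) 1, countermonotoneCopula p v ≤ C p v ∧ C p v ≤ independenceCopula p v) →
      q ≤ vLevel C p q ∧ vLevel C p q ≤ 1 - (1 - q) * p) := by
  have hq' : q ∈ Icc (0 : ℝ) 1 := Ioc_subset_Icc_self hq
  have one_mem : (1 : ℝ) ∈ Icc (0 : ℝ) 1 := right_mem_Icc.2 zero_le_one
  have independence_one : p ≤ independenceCopula p 1 := (mul_one p).ge
  have countermonotone_one : p ≤ countermonotoneCopula p 1 :=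
    (add_sub_cancel_right p 1).ge.trans (le_max_left _ _)
  refine ⟨fun h ↦ ⟨?_, ?_⟩, fun h ↦ ⟨?_, ?_⟩⟩
  · calc
      p * q = vLevel comonotoneCopula p q := (vLevel_comonotoneCopula hp hq').symm
      _ ≤ vLevel C p q :=
        vLevel_le_vLevel hp.1 hq.2 (independence_one.trans (h 1 one_mem).1) fun v hv ↦ (h v hv).2
  · calc
      vLevel C p q ≤ vLevel independenceCopula p q :=
        vLevel_le_vLevel hp.1 hq.2 independence_one fun v hv ↦ (h v hv).1
      _ = q := vLevel_independenceCopula hp.1 hq'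
  · calc
      q = vLevel independenceCopula p q := (vLevel_independenceCopula hp.1 hq').symm
      _ ≤ vLevel C p q :=
        vLevel_le_vLevel hp.1 hq.2 (countermonotone_one.trans (h 1 one_mem).1) fun v hv ↦
          (h v hv).2
  · calc
      vLevel C p q ≤ vLevel countermonotoneCopula p q :=
        vLevel_le_vLevel hp.1 hq.2 countermonotone_one fun v hv ↦ (h v hv).1
      _ = 1 - (1 - q) * p := vLevel_countermonotoneCopula hp hq

end Level

/-- Range bounds for the copula-adjusted probability level. -/
theorem vLevel_range_bounds (C : ℝ → ℝ → ℝ) (hC : IsCopula C)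
    (p q : ℝ) (hp : p ∈ Ioo (0:ℝ) 1) (hq : q ∈ Ioo (0:ℝ) 1) :
    ((∀ u ∈ Icc (0:ℝ) 1, ∀ v ∈ Icc (0:ℝ) 1, u * v ≤ C u v ∧ C u v ≤ min u v) →
      p * q ≤ vLevel C p q ∧ vLevel C p q ≤ q) ∧
    ((∀ u ∈ Icc (0:ℝ) 1, ∀ v ∈ Icc (0:ℝ) 1, max (u + v - 1) 0 ≤ C u v ∧ C u v ≤ u * v) →
      q ≤ vLevel C p q ∧ vLevel C p q ≤ 1 - (1 - q) * p) :=
  (vLevel_range_bounds_general (Ioo_subset_Ioc_self hp) (Ioo_subset_Ioc_self hq)).imp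
    (fun bounds h ↦ bounds (h p (Ioo_subset_Icc_self hp)))
    (fun bounds h ↦ bounds (h p (Ioo_subset_Icc_self hp)))
end

section
/- Let C be a bivariate copula and suppose A : (0,1) → [0,1] satisfies C(p,v)/p → A(v) as p ↓ 0 for every v ∈ (0,1), with locally uniform convergence on (0,1) (i.e., uniformly on every compact [a,b] ⊂ (0,1)). Set p₀ := lim_{v↓0} A(v), p₁ := 1 − lim_{v↑1} A(v), and A⁻(q) := inf{v ∈ (0,1) : A(v) ≥ q}. Then, as p ↓ 0: (a) for every q ∈ (0, p₀), v(q|p; C) → 0; (b) for every q ∈ (p₀, 1−p₁) at which A⁻ is continuous, v(q|p; C) → A⁻(q) ∈ (0,1); (c) for every q ∈ (1−p₁, 1), v(q|p; C) → 1. -/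
open Set Filter Topology

/-- The diagonal copula-adjusted probability level `v(p;C) = inf{v ∈ [0,1] : C(p,v) ≥ p²}`. -/
noncomputable def vDiag (C : ℝ → ℝ → ℝ) (p : ℝ) : ℝ :=
  sInf {v ∈ Icc (0:ℝ) 1 | p ^ 2 ≤ C p v}

/-- The generalized inverse `A⁻(q) = inf{v ∈ (0,1) : A(v) ≥ q}`. -/
noncomputable def genInv (A : ℝ → ℝ) (q : ℝ) : ℝ :=
  sInf {v ∈ Ioo (0:ℝ) 1 | q ≤ A v}

/-!
For a monotone `F`, the generalized inverse at level `q` lies to the left of every `w` with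
`q ≤ F w` and to the right of every `w` with `F w < q`. If `F i w → A w`, a strict inequality
between `q` and `A w` is eventually inherited by `F i w`, so a single point `w` bounds all late
generalized inverses of the `F i` from one side. The three regimes differ only in where such points
`w` are found: arbitrarily close to the left endpoint if `q < A(0⁺)`, arbitrarily close to the right
endpoint if `q > A(1⁻)`, and on both sides of `A⁻(q)` otherwise. In the last case the points
`w > A⁻(q)` must satisfy the strict inequality `q < A w`, and continuity of `A⁻` at `q` provides
them through levels `q' > q`. Copulas enter through the family `v ↦ C(p,v)/p`, as `p ↓ 0`.
-/

section OneSidedNeighborhoods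

variable {α : Type*} [LinearOrder α] [TopologicalSpace α] [OrderTopology α] [DenselyOrdered α]
  {a b : α} {P : α → Prop}

theorem exists_mem_Ioo_of_eventually_nhdsGT (hab : a < b) (h : ∀ᶠ v in 𝓝[>] a, P v) :
    ∃ v ∈ Ioo a b, P v :=
  have := nhdsGT_neBot_of_exists_gt ⟨b, hab⟩
  (Filter.Eventually.and (Ioo_mem_nhdsGT hab) h).exists

theorem exists_mem_Ioo_of_eventually_nhdsLT (hab : a < b) (h : ∀ᶠ v in 𝓝[<] b, P v) :
    ∃ v ∈ Ioo a b, P v :=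
  have := nhdsLT_neBot_of_exists_lt ⟨a, hab⟩
  (Filter.Eventually.and (Ioo_mem_nhdsLT hab) h).exists

end OneSidedNeighborhoods

theorem eventually_exists_mem_le_apply {ι α β : Type*} [TopologicalSpace β] [LinearOrder β]
    [OrderClosedTopology β] {l : Filter ι} {s : Set α} {F : ι → α → β} {w : α} {q y : β}
    (hw : w ∈ s) (hF : Tendsto (fun i => F i w) l (𝓝 y)) (hq : q < y) :
    ∀ᶠ i in l, ∃ v ∈ s, q ≤ F i v :=
  (hF.eventually_const_le hq).mono fun _ hi => ⟨w, hw, hi⟩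

section GenInvOn

variable {ι α β : Type*} [ConditionallyCompleteLinearOrder α] [LinearOrder β]
  {s : Set α} {a b w : α} {F : α → β} {q : β}

/-- The generalized inverse `inf {v ∈ s | F v ≥ q}` of `F` restricted to `s`, the common form of
`vLevel` (where `s = [0,1]`) and `genInv` (where `s = (0,1)`). It is meaningful only when the set is
nonempty and bounded below. -/
noncomputable def genInvOn (s : Set α) (F : α → β) (q : β) : α :=
  sInf {v ∈ s | q ≤ F v}

theorem genInvOn_le (hs : BddBelow s) (hw : w ∈ s) (hq : q ≤ F w) : genInvOn s F q ≤ w :=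
  csInf_le (hs.mono (sep_subset _ _)) ⟨hw, hq⟩

theorem lt_of_lt_genInvOn (hs : BddBelow s) (hw : w ∈ s) (h : w < genInvOn s F q) : F w < q :=
  lt_of_not_ge fun hq => h.not_ge (genInvOn_le hs hw hq)

theorem le_genInvOn (hF : MonotoneOn F s) (hne : ∃ v ∈ s, q ≤ F v) (hw : w ∈ s) (hq : F w < q) :
    w ≤ genInvOn s F q :=
  le_csInf hne fun _ hv => (hF.reflect_lt hw hv.1 (hq.trans_le hv.2)).le

theorem exists_lt_of_genInvOn_lt (hne : ∃ v ∈ s, q ≤ F v) (h : genInvOn s F q < b) :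
    ∃ w ∈ s, q ≤ F w ∧ w < b := by
  obtain ⟨w, ⟨hw, hq⟩, hwb⟩ := exists_lt_of_csInf_lt hne h
  exact ⟨w, hw, hq, hwb⟩

theorem genInvOn_Icc_mem_Icc (hne : ∃ v ∈ Icc a b, q ≤ F v) :
    genInvOn (Icc a b) F q ∈ Icc a b := by
  obtain ⟨w, hw, hq⟩ := hne
  exact ⟨le_csInf ⟨w, hw, hq⟩ fun _ hv => hv.1.1, (genInvOn_le bddBelow_Icc hw hq).trans hw.2⟩

theorem genInvOn_Ioo_mem_Ioo (hF : MonotoneOn F (Ioo a b)) (hlow : ∃ v ∈ Ioo a b, F v < q)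
    (hup : ∃ v ∈ Ioo a b, q ≤ F v) : genInvOn (Ioo a b) F q ∈ Ioo a b := by
  obtain ⟨v, hv, hvq⟩ := hlow
  obtain ⟨w, hw, hqw⟩ := hup
  exact ⟨hv.1.trans_le (le_genInvOn hF ⟨w, hw, hqw⟩ hv hvq),
    (genInvOn_le bddBelow_Ioo hw hqw).trans_lt hw.2⟩

variable [TopologicalSpace β] {l : Filter ι} {F : ι → α → β} {A : α → β} {y : β}

section PointwiseLimits

variable [OrderClosedTopology β]

theorem eventually_genInvOn_le (hs : BddBelow s) (hw : w ∈ s)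
    (hF : Tendsto (fun i => F i w) l (𝓝 y)) (hq : q < y) :
    ∀ᶠ i in l, genInvOn s (F i) q ≤ w :=
  (hF.eventually_const_le hq).mono fun _ hi => genInvOn_le hs hw hi

theorem eventually_le_genInvOn (hmono : ∀ᶠ i in l, MonotoneOn (F i) s)
    (hne : ∀ᶠ i in l, ∃ v ∈ s, q ≤ F i v) (hw : w ∈ s)
    (hF : Tendsto (fun i => F i w) l (𝓝 y)) (hq : y < q) :
    ∀ᶠ i in l, w ≤ genInvOn s (F i) q := by
  filter_upwards [hmono, hne, hF.eventually_lt_const hq] with i himono hine hi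
  exact le_genInvOn himono hine hw hi

variable [TopologicalSpace α] [OrderTopology α] [DenselyOrdered α]

theorem tendsto_genInvOn_Icc_left (hab : a < b)
    (hF : ∀ v ∈ Ioo a b, Tendsto (fun i => F i v) l (𝓝 (A v)))
    (hA : Tendsto A (𝓝[>] a) (𝓝 y)) (hq : q < y) :
    Tendsto (fun i => genInvOn (Icc a b) (F i) q) l (𝓝 a) := by
  have exists_near {c : α} (hac : a < c) : ∃ w ∈ Ioo a b, w < c ∧ q < A w := by
    obtain ⟨w, hw, hqw⟩ :=
      exists_mem_Ioo_of_eventually_nhdsGT (lt_min hab hac) (hA.eventually_const_lt hq)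
    exact ⟨w, ⟨hw.1, hw.2.trans_le (min_le_left _ _)⟩, hw.2.trans_le (min_le_right _ _), hqw⟩
  refine tendsto_order.2 ⟨fun c hca => ?_, fun c hac => ?_⟩
  · obtain ⟨w, hw, -, hqw⟩ := exists_near hab
    filter_upwards [eventually_exists_mem_le_apply (Ioo_subset_Icc_self hw) (hF w hw) hqw] with i hi
    exact hca.trans_le (genInvOn_Icc_mem_Icc hi).1
  · obtain ⟨w, hw, hwc, hqw⟩ := exists_near hac
    filter_upwards [eventually_genInvOn_le bddBelow_Icc (Ioo_subset_Icc_self hw) (hF w hw) hqw]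
      with i hi
    exact hi.trans_lt hwc

theorem tendsto_genInvOn_Icc_right (hab : a < b)
    (hmono : ∀ᶠ i in l, MonotoneOn (F i) (Icc a b))
    (hF : ∀ v ∈ Ioo a b, Tendsto (fun i => F i v) l (𝓝 (A v)))
    (hA : Tendsto A (𝓝[<] b) (𝓝 y)) (hyq : y < q) (hqb : ∀ᶠ i in l, q ≤ F i b) :
    Tendsto (fun i => genInvOn (Icc a b) (F i) q) l (𝓝 b) := by
  have hne : ∀ᶠ i in l, ∃ v ∈ Icc a b, q ≤ F i v :=
    hqb.mono fun _ hi => ⟨b, right_mem_Icc.2 hab.le, hi⟩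
  refine tendsto_order.2 ⟨fun c hcb => ?_, fun c hbc => ?_⟩
  · obtain ⟨w, ⟨hw, hwb⟩, hwq⟩ :=
      exists_mem_Ioo_of_eventually_nhdsLT (max_lt hab hcb) (hA.eventually_lt_const hyq)
    obtain ⟨haw, hcw⟩ := max_lt_iff.1 hw
    filter_upwards [eventually_le_genInvOn hmono hne ⟨haw.le, hwb.le⟩ (hF w ⟨haw, hwb⟩) hwq]
      with i hi
    exact hcw.trans_le hi
  · filter_upwards [hne] with i hi
    exact (genInvOn_Icc_mem_Icc hi).2.trans_lt hbc

end PointwiseLimits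

section ContinuityPoints

variable [TopologicalSpace α] [OrderTopology β] [DenselyOrdered β]

theorem exists_mem_lt_apply_of_genInvOn_lt [OrderClosedTopology α] {c : α}
    (hcont : ContinuousWithinAt (genInvOn s A) (Ioi q) q) (hne : ∃ v ∈ s, q < A v)
    (h : genInvOn s A q < c) : ∃ w ∈ s, q < A w ∧ w < c := by
  obtain ⟨v, hv, hqv⟩ := hne
  obtain ⟨q', ⟨hqq', hq'v⟩, hq'c⟩ :=
    exists_mem_Ioo_of_eventually_nhdsGT hqv (hcont.tendsto.eventually_lt_const h)
  obtain ⟨w, hw, hq'w, hwc⟩ := exists_lt_of_genInvOn_lt ⟨v, hv, hq'v.le⟩ hq'c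
  exact ⟨w, hw, hqq'.trans_le hq'w, hwc⟩

theorem tendsto_genInvOn_Icc_of_continuousWithinAt [OrderTopology α] [DenselyOrdered α]
    (hmono : ∀ᶠ i in l, MonotoneOn (F i) (Icc a b))
    (hF : ∀ v ∈ Ioo a b, Tendsto (fun i => F i v) l (𝓝 (A v)))
    (hmem : genInvOn (Ioo a b) A q ∈ Ioo a b) (hne : ∃ v ∈ Ioo a b, q < A v)
    (hcont : ContinuousWithinAt (genInvOn (Ioo a b) A) (Ioi q) q) :
    Tendsto (fun i => genInvOn (Icc a b) (F i) q) l (𝓝 (genInvOn (Ioo a b) A q)) := by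
  refine tendsto_order.2 ⟨fun c hc => ?_, fun c hc => ?_⟩
  · obtain ⟨w, hcw, hw⟩ := exists_between (max_lt hmem.1 hc)
    obtain ⟨haw, hcw⟩ := max_lt_iff.1 hcw
    have hw_mem : w ∈ Ioo a b := ⟨haw, hw.trans hmem.2⟩
    have hwq : A w < q := lt_of_lt_genInvOn bddBelow_Ioo hw_mem hw
    obtain ⟨v, hv, hqv⟩ := hne
    have hne_ev : ∀ᶠ i in l, ∃ v ∈ Icc a b, q ≤ F i v :=
      eventually_exists_mem_le_apply (Ioo_subset_Icc_self hv) (hF v hv) hqv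
    filter_upwards [eventually_le_genInvOn hmono hne_ev (Ioo_subset_Icc_self hw_mem)
      (hF w hw_mem) hwq] with i hi
    exact hcw.trans_le hi
  · obtain ⟨w, hw, hqw, hwc⟩ := exists_mem_lt_apply_of_genInvOn_lt hcont hne hc
    filter_upwards [eventually_genInvOn_le bddBelow_Icc (Ioo_subset_Icc_self hw) (hF w hw) hqw]
      with i hi
    exact hi.trans_lt hwc

end ContinuityPoints

end GenInvOn

theorem vLevel_eq_genInvOn (C : ℝ → ℝ → ℝ) (p : ℝ) :
    vLevel C p = genInvOn (Icc 0 1) fun v => C p v / p :=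
  rfl

theorem genInv_eq_genInvOn (A : ℝ → ℝ) : genInv A = genInvOn (Ioo 0 1) A :=
  rfl

namespace IsCopula

variable {C : ℝ → ℝ → ℝ}

theorem monotoneOn (hC : IsCopula C) {u : ℝ} (hu : u ∈ Icc (0 : ℝ) 1) :
    MonotoneOn (C u) (Icc 0 1) := by
  obtain ⟨-, -, hzero, -, -, hincr⟩ := hC
  intro v hv w hw hvw
  have h := hincr 0 u v w (left_mem_Icc.2 zero_le_one) hu hv hw hu.1 hvw
  rw [hzero v hv, hzero w hw] at h
  linarith

theorem apply_one (hC : IsCopula C) {u : ℝ} (hu : u ∈ Icc (0 : ℝ) 1) : C u 1 = u :=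
  hC.2.2.2.1 u hu

theorem eventually_monotoneOn (hC : IsCopula C) :
    ∀ᶠ p in 𝓝[>] (0 : ℝ), MonotoneOn (C p) (Icc 0 1) := by
  filter_upwards [Ioc_mem_nhdsGT zero_lt_one] with p hp
  exact hC.monotoneOn (Ioc_subset_Icc_self hp)

theorem tendsto_apply_one_div (hC : IsCopula C) :
    Tendsto (fun p => C p 1 / p) (𝓝[>] (0 : ℝ)) (𝓝 1) := by
  refine tendsto_const_nhds.congr' ?_
  filter_upwards [Ioc_mem_nhdsGT zero_lt_one] with p hp
  rw [hC.apply_one (Ioc_subset_Icc_self hp), div_self hp.1.ne']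

end IsCopula

theorem vLevel_limit_regimes_general {C : ℝ → ℝ → ℝ} {A : ℝ → ℝ} {p₀ p₁ : ℝ}
    (hmono : ∀ᶠ p in 𝓝[>] (0 : ℝ), MonotoneOn (C p) (Icc 0 1))
    (hone : Tendsto (fun p => C p 1 / p) (𝓝[>] (0 : ℝ)) (𝓝 1))
    (hA : ∀ v ∈ Ioo (0 : ℝ) 1, Tendsto (fun p => C p v / p) (𝓝[>] (0 : ℝ)) (𝓝 (A v)))
    (hp₀ : Tendsto A (𝓝[>] (0 : ℝ)) (𝓝 p₀))
    (hp₁ : Tendsto A (𝓝[<] (1 : ℝ)) (𝓝 (1 - p₁))) :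
    (∀ q < p₀, Tendsto (fun p => vLevel C p q) (𝓝[>] (0 : ℝ)) (𝓝 0)) ∧
    (∀ q ∈ Ioo p₀ (1 - p₁), ContinuousAt (genInv A) q →
      genInv A q ∈ Ioo (0 : ℝ) 1 ∧
      Tendsto (fun p => vLevel C p q) (𝓝[>] (0 : ℝ)) (𝓝 (genInv A q))) ∧
    (∀ q ∈ Ioo (1 - p₁) (1 : ℝ), Tendsto (fun p => vLevel C p q) (𝓝[>] (0 : ℝ)) (𝓝 1)) := by
  have hmono_div : ∀ᶠ p in 𝓝[>] (0 : ℝ), MonotoneOn (fun v => C p v / p) (Icc 0 1) := by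
    filter_upwards [hmono, self_mem_nhdsWithin] with p hp hp_pos v hv w hw hvw
    exact div_le_div_of_nonneg_right (hp hv hw hvw) (le_of_lt hp_pos)
  have hA_mono : MonotoneOn A (Ioo 0 1) :=
    monotoneOn_of_frequently_monotoneOn_of_tendsto
      (hmono_div.mono fun _ hp => hp.mono Ioo_subset_Icc_self).frequently hA
  simp only [vLevel_eq_genInvOn, genInv_eq_genInvOn]
  refine ⟨fun q hq => tendsto_genInvOn_Icc_left zero_lt_one hA hp₀ hq, ?_, fun q hq =>
    tendsto_genInvOn_Icc_right zero_lt_one hmono_div hA hp₁ hq.1 (hone.eventually_const_le hq.2)⟩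
  rintro q ⟨hp₀q, hqp₁⟩ hcont
  obtain ⟨v, hv, hvq⟩ :=
    exists_mem_Ioo_of_eventually_nhdsGT zero_lt_one (hp₀.eventually_lt_const hp₀q)
  obtain ⟨w, hw, hqw⟩ :=
    exists_mem_Ioo_of_eventually_nhdsLT zero_lt_one (hp₁.eventually_const_lt hqp₁)
  have hmem := genInvOn_Ioo_mem_Ioo hA_mono ⟨v, hv, hvq⟩ ⟨w, hw, hqw.le⟩
  exact ⟨hmem, tendsto_genInvOn_Icc_of_continuousWithinAt hmono_div hA hmem ⟨w, hw, hqw⟩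
    hcont.continuousWithinAt⟩

/-- Limit of the copula-adjusted probability level `v(q|p;C)` as `p ↓ 0`, in terms of the
boundary masses `p₀ = A(0⁺)` and `p₁ = 1 − A(1⁻)` of the limiting conditional cdf `A`. -/
theorem vLevel_limit_regimes (C : ℝ → ℝ → ℝ) (hC : IsCopula C)
    (A : ℝ → ℝ) (p₀ p₁ : ℝ)
    (hArange : ∀ v ∈ Ioo (0:ℝ) 1, A v ∈ Icc (0:ℝ) 1)
    (hA : ∀ v ∈ Ioo (0:ℝ) 1, Tendsto (fun p => C p v / p) (𝓝[>] (0:ℝ)) (𝓝 (A v)))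
    (hunif : ∀ a b : ℝ, 0 < a → a < b → b < 1 →
      TendstoUniformlyOn (fun p v => C p v / p) A (𝓝[>] (0:ℝ)) (Icc a b))
    (hp₀ : Tendsto A (𝓝[>] (0:ℝ)) (𝓝 p₀))
    (hp₁ : Tendsto A (𝓝[<] (1:ℝ)) (𝓝 (1 - p₁))) :
    (∀ q ∈ Ioo (0:ℝ) p₀, Tendsto (fun p => vLevel C p q) (𝓝[>] (0:ℝ)) (𝓝 0)) ∧
    (∀ q ∈ Ioo p₀ (1 - p₁), ContinuousAt (genInv A) q →
      genInv A q ∈ Ioo (0:ℝ) 1 ∧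
      Tendsto (fun p => vLevel C p q) (𝓝[>] (0:ℝ)) (𝓝 (genInv A q))) ∧
    (∀ q ∈ Ioo (1 - p₁) (1:ℝ), Tendsto (fun p => vLevel C p q) (𝓝[>] (0:ℝ)) (𝓝 1)) := by
  obtain ⟨hleft, hmiddle, hright⟩ :=
    vLevel_limit_regimes_general hC.eventually_monotoneOn hC.tendsto_apply_one_div hA hp₀ hp₁
  exact ⟨fun q hq => hleft q hq.2, hmiddle, hright⟩
end

section
/- Let C be a bivariate copula admitting a lower tail expansion with tail order κ = 1: there exist b : (0,∞)² → [0,∞), non-decreasing in each argument, and a remainder R such that C(u·w₁, u·w₂)/u = b(w₁,w₂) + R(u; w₁, w₂), where R(u; w₁, w₂) → 0 uniformly as u·w₁ → 0 and u·w₂ → 0, and such that b_∞ := sup_{r>0} b(1,r) = lim_{r→∞} b(1,r) ∈ (0,1]. Assume moreover that A(v) := lim_{p↓0} C(p,v)/p exists for every v ∈ (0,1). Then lim_{v↓0} A(v) = b_∞. -/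
open Set Filter Topology

/-!
Taking `u = p`, `w₁ = 1` and `w₂ = v / p` in the tail expansion gives
`C(p, v) / p = b(1, v / p) + R(p; 1, v / p)`, where the remainder is small as soon as `p` and `v`
both are, no matter how large `v / p` is. Letting `p ↓ 0` with `v` fixed turns the left-hand side
into `A(v)` and `b(1, v / p)` into `b_∞`, so `A(v) - b_∞` is the iterated limit of a quantity whose
joint limit is `0`.
-/

theorem tendsto_of_tendsto_curry_of_eventually_tendsto {α β X : Type*} [TopologicalSpace X]
    [RegularSpace X] {l : Filter α} {m : Filter β} [m.NeBot] {f : α × β → X} {g : α → X} {x : X}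
    (hf : Tendsto f (l.curry m) (𝓝 x))
    (hg : ∀ᶠ a in l, Tendsto (fun b => f (a, b)) m (𝓝 (g a))) :
    Tendsto g l (𝓝 x) := by
  refine (closed_nhds_basis x).tendsto_right_iff.2 fun s ⟨hs, hs_closed⟩ => ?_
  filter_upwards [hg, eventually_curry_iff.1 (hf hs)] with a ha hfs
  exact hs_closed.mem_of_tendsto ha hfs

theorem tendsto_const_div_nhdsGT_zero_atTop {𝕜 : Type*} [Field 𝕜] [LinearOrder 𝕜]
    [IsStrictOrderedRing 𝕜] [TopologicalSpace 𝕜] [OrderTopology 𝕜] {c : 𝕜} (hc : 0 < c) :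
    Tendsto (fun x => c / x) (𝓝[>] 0) atTop := by
  simpa only [div_eq_mul_inv] using tendsto_inv_nhdsGT_zero.const_mul_atTop hc

/-- `C` has a lower tail expansion of tail order `κ = 1` with tail dependence function `b`:
`C (u w₁, u w₂) / u = b (w₁, w₂) + R (u; w₁, w₂)`, where `R → 0` uniformly as `u w₁, u w₂ → 0`.
The identity is only required where both arguments of `C` are at most `1`, the domain of a
copula. -/
def HasLowerTailExpansion (C b : ℝ → ℝ → ℝ) : Prop :=
  ∃ R : ℝ → ℝ → ℝ → ℝ,
    (∀ u w₁ w₂ : ℝ, 0 < u → 0 < w₁ → 0 < w₂ → u * w₁ ≤ 1 → u * w₂ ≤ 1 →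
      C (u * w₁) (u * w₂) / u = b w₁ w₂ + R u w₁ w₂) ∧
    ∀ ε > (0 : ℝ), ∃ δ > (0 : ℝ), ∀ u w₁ w₂ : ℝ, 0 < u → 0 < w₁ → 0 < w₂ →
      u * w₁ ≤ δ → u * w₂ ≤ δ → |R u w₁ w₂| ≤ ε

namespace HasLowerTailExpansion

variable {C b : ℝ → ℝ → ℝ}

theorem exists_abs_sub_le (h : HasLowerTailExpansion C b) {ε : ℝ} (hε : 0 < ε) :
    ∃ δ > 0, ∀ u w₁ w₂ : ℝ, 0 < u → 0 < w₁ → 0 < w₂ → u * w₁ ≤ δ → u * w₂ ≤ δ →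
      |C (u * w₁) (u * w₂) / u - b w₁ w₂| ≤ ε := by
  obtain ⟨R, hexp, hR⟩ := h
  obtain ⟨δ, hδ, hRδ⟩ := hR ε hε
  refine ⟨min δ 1, lt_min hδ one_pos, fun u w₁ w₂ hu hw₁ hw₂ h₁ h₂ => ?_⟩
  rw [le_min_iff] at h₁ h₂
  rw [hexp u w₁ w₂ hu hw₁ hw₂ h₁.2 h₂.2, add_sub_cancel_left]
  exact hRδ u w₁ w₂ hu hw₁ hw₂ h₁.1 h₂.1

theorem tendsto_div_sub_prod (h : HasLowerTailExpansion C b) :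
    Tendsto (fun x : ℝ × ℝ => C x.2 x.1 / x.2 - b 1 (x.1 / x.2)) (𝓝[>] 0 ×ˢ 𝓝[>] 0) (𝓝 0) := by
  refine Metric.nhds_basis_closedBall.tendsto_right_iff.2 fun ε hε => ?_
  obtain ⟨δ, hδ, hle⟩ := h.exists_abs_sub_le hε
  filter_upwards [prod_mem_prod (Ioc_mem_nhdsGT hδ) (Ioc_mem_nhdsGT hδ)]
    with ⟨v, p⟩ ⟨⟨hv, hvδ⟩, ⟨hp, hpδ⟩⟩
  have hpv : p * (v / p) = v := mul_div_cancel₀ v hp.ne'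
  simpa only [mem_closedBall_zero_iff, Real.norm_eq_abs, mul_one, hpv] using
    hle p 1 (v / p) hp one_pos (div_pos hv hp) (by rwa [mul_one]) (by rwa [hpv])

end HasLowerTailExpansion

theorem mass_at_zero_eq_binf_general {C b : ℝ → ℝ → ℝ} {A : ℝ → ℝ} {binf : ℝ}
    (hCb : HasLowerTailExpansion C b) (hbinf : Tendsto (fun r => b 1 r) atTop (𝓝 binf))
    (hA : ∀ v ∈ Ioo (0 : ℝ) 1, Tendsto (fun p => C p v / p) (𝓝[>] 0) (𝓝 (A v))) :
    Tendsto A (𝓝[>] 0) (𝓝 binf) := by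
  rw [← tendsto_sub_nhds_zero_iff]
  refine tendsto_of_tendsto_curry_of_eventually_tendsto
    (hCb.tendsto_div_sub_prod.mono_left curry_le_prod) ?_
  filter_upwards [Ioo_mem_nhdsGT one_pos] with v hv
  exact (hA v hv).sub (hbinf.comp (tendsto_const_div_nhdsGT_zero_atTop hv.1))

/-- If the copula admits a lower tail expansion with tail order `κ = 1`, with tail dependence
function `b` (non-decreasing in each argument, bounded) and `b_∞ = sup_{r>0} b(1,r)
= lim_{r→∞} b(1,r) ∈ (0,1]`, and the limiting conditional cdf `A(v) = lim_{p↓0} C(p,v)/p`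
exists on `(0,1)`, then `A(0⁺) = b_∞`. -/
theorem mass_at_zero_eq_binf (C : ℝ → ℝ → ℝ) (hC : IsCopula C)
    (b : ℝ → ℝ → ℝ) (R : ℝ → ℝ → ℝ → ℝ) (binf : ℝ) (A : ℝ → ℝ)
    (hexp : ∀ u w₁ w₂ : ℝ, 0 < u → 0 < w₁ → 0 < w₂ → u * w₁ ≤ 1 → u * w₂ ≤ 1 →
      C (u * w₁) (u * w₂) / u = b w₁ w₂ + R u w₁ w₂)
    (hR : ∀ ε > (0:ℝ), ∃ δ > (0:ℝ), ∀ u w₁ w₂ : ℝ, 0 < u → 0 < w₁ → 0 < w₂ →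
      u * w₁ ≤ δ → u * w₂ ≤ δ → |R u w₁ w₂| ≤ ε)
    (hbnn : ∀ w₁ > (0:ℝ), ∀ w₂ > (0:ℝ), 0 ≤ b w₁ w₂)
    (hbmono₁ : ∀ w₂ > (0:ℝ), MonotoneOn (fun w₁ => b w₁ w₂) (Ioi (0:ℝ)))
    (hbmono₂ : ∀ w₁ > (0:ℝ), MonotoneOn (fun w₂ => b w₁ w₂) (Ioi (0:ℝ)))
    (hbsup : ∀ r > (0:ℝ), b 1 r ≤ binf)
    (hbinf : Tendsto (fun r => b 1 r) atTop (𝓝 binf))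
    (hbinf_mem : binf ∈ Ioc (0:ℝ) 1)
    (hA : ∀ v ∈ Ioo (0:ℝ) 1, Tendsto (fun p => C p v / p) (𝓝[>] (0:ℝ)) (𝓝 (A v))) :
    Tendsto A (𝓝[>] (0:ℝ)) (𝓝 binf) :=
  mass_at_zero_eq_binf_general ⟨R, hexp, hR⟩ hbinf hA
end

section
/- Let C be a bivariate copula admitting a lower tail expansion with tail order κ = 1: C(u·w₁, u·w₂)/u = b(w₁,w₂) + R(u; w₁, w₂), where R(u; w₁, w₂) → 0 uniformly as u·w₁ → 0 and u·w₂ → 0. Assume (B1): b(1,r) = a₁·r + o(r) as r ↓ 0 for some a₁ > 0; and (B2): H(r) := b(1,r) is continuous and strictly increasing on (0,∞), with lim_{r↓0} H(r) = 0 and lim_{r→∞} H(r) = b_∞ ∈ (0,1]. Then for every q ∈ (0, b_∞), v(q|p; C) / (H⁻¹(q)·p) → 1 as p ↓ 0; in particular v(q|p; C) → 0. -/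
open Set Filter Topology

/-!
Rescaling `v = p r` turns `vLevel C p q / p` into the generalized inverse at `q` of the monotone
function `r ↦ C p (p r) / p`. These functions converge pointwise to `H` as `p ↓ 0`, and generalized
inverses of monotone functions converge along with them when the limit is strictly increasing.
Positivity of the limit `H⁻¹(q)` comes from `C p v ≤ v`, which gives `H r ≤ r`.
-/

section GeneralizedInverse

/-- The generalized (left-continuous) inverse of `f` restricted to `S`, evaluated at `q`. Both
`vLevel` and the inverse of the limit function are of this form. The value is meaningful only when
`{x ∈ S | q ≤ f x}` is nonempty and bounded below. -/
def generalizedInverseOn {α β : Type*} [InfSet α] [LE β] (f : α → β) (S : Set α) (q : β) : α :=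
  sInf {x ∈ S | q ≤ f x}

section Order

variable {α β : Type*} [ConditionallyCompleteLinearOrder α] [LinearOrder β]
  {f : α → β} {S : Set α} {a x y : α} {q : β}

theorem generalizedInverseOn_le (hS : BddBelow S) (hx : x ∈ S) (hqx : q ≤ f x) :
    generalizedInverseOn f S q ≤ x :=
  csInf_le (hS.mono (sep_subset S fun y => q ≤ f y)) ⟨hx, hqx⟩

theorem mem_lowerBounds_superlevel (hf : MonotoneOn f S) (hx : x ∈ S) (hxq : f x < q) :
    x ∈ lowerBounds {y ∈ S | q ≤ f y} :=
  fun _ hy => (hf.reflect_lt hx hy.1 (hxq.trans_le hy.2)).le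

theorem le_generalizedInverseOn (hf : MonotoneOn f S) (hx : x ∈ S) (hxq : f x < q)
    (hy : y ∈ S) (hqy : q ≤ f y) : x ≤ generalizedInverseOn f S q :=
  le_csInf (s := {x ∈ S | q ≤ f x}) ⟨y, ⟨hy, hqy⟩⟩ (mem_lowerBounds_superlevel hf hx hxq)

theorem exists_apply_lt_of_lt_generalizedInverseOn [DenselyOrdered α] (hS : S.OrdConnected)
    (hf : MonotoneOn f S) (hx : x ∈ S) (hxq : f x < q) (hy : y ∈ S) (hqy : q ≤ f y)
    (ha : a < generalizedInverseOn f S q) : ∃ z ∈ S, a < z ∧ f z < q := by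
  rcases lt_or_ge a x with hax | hxa
  · exact ⟨x, hx, hax, hxq⟩
  obtain ⟨z, haz, hz⟩ := exists_between ha
  have hbdd : BddBelow {x ∈ S | q ≤ f x} := ⟨x, mem_lowerBounds_superlevel hf hx hxq⟩
  have hzS : z ∈ S := hS.out hx hy
    ⟨hxa.trans haz.le, hz.le.trans (csInf_le hbdd ⟨hy, hqy⟩)⟩
  exact ⟨z, hzS, haz, lt_of_not_ge fun hqz => notMem_of_lt_csInf hz hbdd ⟨hzS, hqz⟩⟩

theorem exists_lt_apply_of_generalizedInverseOn_lt [DenselyOrdered α] (hS : S.OrdConnected)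
    (hf : StrictMonoOn f S) (hy : y ∈ S) (hqy : q < f y)
    (ha : generalizedInverseOn f S q < a) : ∃ z ∈ S, z < a ∧ q < f z := by
  obtain ⟨s, ⟨hs, hqs⟩, hsa⟩ := exists_lt_of_csInf_lt (s := {x ∈ S | q ≤ f x}) ⟨y, hy, hqy.le⟩ ha
  rcases lt_or_ge s y with hsy | hys
  · obtain ⟨z, hsz, hz⟩ := exists_between (lt_min hsa hsy)
    have hzS : z ∈ S := hS.out hs hy ⟨hsz.le, (hz.trans_le (min_le_right _ _)).le⟩
    exact ⟨z, hzS, hz.trans_le (min_le_left _ _), hqs.trans_lt (hf hs hzS hsz)⟩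
  · exact ⟨s, hs, hsa, hqy.trans_le (hf.monotoneOn hy hs hys)⟩

theorem tendsto_generalizedInverseOn [DenselyOrdered α] [TopologicalSpace α] [OrderTopology α]
    [TopologicalSpace β] [OrderClosedTopology β] {ι : Type*} {l : Filter ι} {F : ι → α → β}
    {D : ι → Set α} (hS : S.OrdConnected)
    (hF : ∀ᶠ i in l, MonotoneOn (F i) (D i)) (hbdd : ∀ᶠ i in l, BddBelow (D i))
    (hD : ∀ z ∈ S, ∀ᶠ i in l, z ∈ D i) (hlim : ∀ z ∈ S, Tendsto (fun i => F i z) l (𝓝 (f z)))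
    (hf : StrictMonoOn f S) (hx : x ∈ S) (hxq : f x < q) (hy : y ∈ S) (hqy : q < f y) :
    Tendsto (fun i => generalizedInverseOn (F i) (D i) q) l (𝓝 (generalizedInverseOn f S q)) := by
  refine tendsto_order.2 ⟨fun a ha => ?_, fun a ha => ?_⟩
  · obtain ⟨z, hz, haz, hzq⟩ :=
      exists_apply_lt_of_lt_generalizedInverseOn hS hf.monotoneOn hx hxq hy hqy.le ha
    filter_upwards [hF, hD z hz, hD y hy, (hlim z hz).eventually_lt_const hzq,
      (hlim y hy).eventually_const_lt hqy] with i hFi hzi hyi hzq hqy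
    exact haz.trans_le (le_generalizedInverseOn hFi hzi hzq hyi hqy.le)
  · obtain ⟨z, hz, hza, hqz⟩ := exists_lt_apply_of_generalizedInverseOn_lt hS hf hy hqy ha
    filter_upwards [hbdd, hD z hz, (hlim z hz).eventually_const_lt hqz] with i hbi hzi hqz
    exact (generalizedInverseOn_le hbi hzi hqz.le).trans_lt hza

end Order

open scoped Pointwise in
theorem generalizedInverseOn_div {β : Type*} [LE β] (f : ℝ → β) (S : Set ℝ) (q : β) {p : ℝ}
    (hp : 0 < p) : generalizedInverseOn f S q / p =
      generalizedInverseOn (fun r => f (p * r)) ((p * ·) ⁻¹' S) q := by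
  have hset : {x ∈ S | q ≤ f x} = p • {r ∈ (p * ·) ⁻¹' S | q ≤ f (p * r)} := by
    ext x
    simp [mem_smul_set_iff_inv_smul_mem₀ hp.ne', mul_inv_cancel_left₀ hp.ne']
  rw [generalizedInverseOn, hset, Real.sInf_smul_of_nonneg hp.le, smul_eq_mul,
    mul_div_cancel_left₀ _ hp.ne', generalizedInverseOn]

end GeneralizedInverse

namespace IsCopula

variable {C : ℝ → ℝ → ℝ} {p v : ℝ}

theorem monotoneOn_right (hC : IsCopula C) (hp : p ∈ Icc (0 : ℝ) 1) :
    MonotoneOn (C p) (Icc 0 1) := by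
  obtain ⟨-, -, hC0, -, -, hrect⟩ := hC
  intro v hv w hw hvw
  have h := hrect 0 p v w ⟨le_rfl, zero_le_one⟩ hp hv hw hp.1 hvw
  rw [hC0 v hv, hC0 w hw] at h
  linarith

theorem monotoneOn_left (hC : IsCopula C) (hv : v ∈ Icc (0 : ℝ) 1) :
    MonotoneOn (fun u => C u v) (Icc 0 1) := by
  obtain ⟨-, hC0, -, -, -, hrect⟩ := hC
  intro u hu w hw huw
  have h := hrect u w 0 v hu hw ⟨le_rfl, zero_le_one⟩ hv huw hv.1
  rw [hC0 u hu, hC0 w hw] at h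
  linarith

theorem apply_le_right (hC : IsCopula C) (hp : p ∈ Icc (0 : ℝ) 1) (hv : v ∈ Icc (0 : ℝ) 1) :
    C p v ≤ v := by
  have hle : C p v ≤ C 1 v := hC.monotoneOn_left hv hp ⟨zero_le_one, le_rfl⟩ hp.2
  obtain ⟨-, -, -, -, hC1, -⟩ := hC
  rwa [hC1 v hv] at hle

end IsCopula

theorem eventually_mul_le_nhdsGT_zero {w δ : ℝ} (hδ : 0 < δ) :
    ∀ᶠ u in 𝓝[>] (0 : ℝ), u * w ≤ δ := by
  have h : Tendsto (fun u : ℝ => u * w) (𝓝[>] 0) (𝓝 0) :=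
    ((continuous_mul_const w).tendsto' 0 0 (zero_mul w)).mono_left nhdsWithin_le_nhds
  exact h.eventually_le_const hδ

theorem eventually_mul_mem_Icc {r : ℝ} (hr : 0 < r) :
    ∀ᶠ p in 𝓝[>] (0 : ℝ), p * r ∈ Icc (0 : ℝ) 1 := by
  filter_upwards [self_mem_nhdsWithin, eventually_mul_le_nhdsGT_zero one_pos] with p hp hpr
  exact ⟨(mul_pos hp hr).le, hpr⟩

theorem IsCopula.tail_limit_le {C : ℝ → ℝ → ℝ} {r c : ℝ} (hC : IsCopula C) (hr : 0 < r)
    (hlim : Tendsto (fun p => C p (p * r) / p) (𝓝[>] 0) (𝓝 c)) : c ≤ r := by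
  refine le_of_tendsto hlim ?_
  filter_upwards [Ioc_mem_nhdsGT one_pos, eventually_mul_mem_Icc hr] with p hp hpr
  exact (div_le_iff₀' hp.1).2 (hC.apply_le_right ⟨hp.1.le, hp.2⟩ hpr)

theorem IsCopula.tendsto_vLevel_div {C : ℝ → ℝ → ℝ} {H : ℝ → ℝ} {q r s : ℝ} (hC : IsCopula C)
    (hlim : ∀ r > 0, Tendsto (fun p => C p (p * r) / p) (𝓝[>] 0) (𝓝 (H r)))
    (hH : StrictMonoOn H (Ioi 0)) (hr : 0 < r) (hrq : H r < q) (hs : 0 < s) (hqs : q < H s) :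
    Tendsto (fun p => vLevel C p q / p) (𝓝[>] 0) (𝓝 (generalizedInverseOn H (Ioi 0) q)) := by
  have hmono : ∀ᶠ p in 𝓝[>] (0 : ℝ),
      MonotoneOn (fun r => C p (p * r) / p) ((p * ·) ⁻¹' Icc 0 1) := by
    filter_upwards [Ioc_mem_nhdsGT one_pos] with p ⟨hp0, hp1⟩ x hx y hy hxy
    have hmul : p * x ≤ p * y := mul_le_mul_of_nonneg_left hxy hp0.le
    exact div_le_div_of_nonneg_right (hC.monotoneOn_right ⟨hp0.le, hp1⟩ hx hy hmul) hp0.le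
  have hbdd : ∀ᶠ p in 𝓝[>] (0 : ℝ), BddBelow ((p * ·) ⁻¹' Icc (0 : ℝ) 1) := by
    filter_upwards [self_mem_nhdsWithin] with p hp
    exact ⟨0, fun x hx => nonneg_of_mul_nonneg_right hx.1 hp⟩
  refine (tendsto_generalizedInverseOn ordConnected_Ioi hmono hbdd
    (fun _ => eventually_mul_mem_Icc) hlim hH hr hrq hs hqs).congr' ?_
  filter_upwards [self_mem_nhdsWithin] with p hp
  exact (generalizedInverseOn_div (fun v => C p v / p) (Icc 0 1) q hp).symm

theorem tendsto_of_uniform_tail_remainder {R : ℝ → ℝ → ℝ → ℝ} {w₁ w₂ : ℝ}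
    (hR : ∀ ε > (0 : ℝ), ∃ δ > (0 : ℝ), ∀ u w₁ w₂ : ℝ, 0 < u → 0 < w₁ → 0 < w₂ →
      u * w₁ ≤ δ → u * w₂ ≤ δ → |R u w₁ w₂| ≤ ε) (hw₁ : 0 < w₁) (hw₂ : 0 < w₂) :
    Tendsto (fun u => R u w₁ w₂) (𝓝[>] 0) (𝓝 0) := by
  refine Metric.nhds_basis_closedBall.tendsto_right_iff.2 fun ε hε => ?_
  obtain ⟨δ, hδ, hRδ⟩ := hR ε hε
  filter_upwards [self_mem_nhdsWithin, eventually_mul_le_nhdsGT_zero hδ,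
    eventually_mul_le_nhdsGT_zero hδ] with u hu h₁ h₂
  simpa using hRδ u w₁ w₂ hu hw₁ hw₂ h₁ h₂

theorem tendsto_of_tail_expansion {C : ℝ → ℝ → ℝ} {R : ℝ → ℝ} {w₁ w₂ c : ℝ}
    (hexp : ∀ u > 0, u * w₁ ≤ 1 → u * w₂ ≤ 1 → C (u * w₁) (u * w₂) / u = c + R u)
    (hR : Tendsto R (𝓝[>] 0) (𝓝 0)) :
    Tendsto (fun u => C (u * w₁) (u * w₂) / u) (𝓝[>] 0) (𝓝 c) := by
  have hsum := hR.const_add c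
  rw [add_zero] at hsum
  refine hsum.congr' ?_
  filter_upwards [self_mem_nhdsWithin, eventually_mul_le_nhdsGT_zero one_pos,
    eventually_mul_le_nhdsGT_zero one_pos] with u hu h₁ h₂
  exact (hexp u hu h₁ h₂).symm

theorem vLevel_tail_attraction_rate_general {C : ℝ → ℝ → ℝ} (hC : IsCopula C) {H : ℝ → ℝ}
    {binf : ℝ} (hlim : ∀ r > 0, Tendsto (fun p => C p (p * r) / p) (𝓝[>] 0) (𝓝 (H r)))
    (hH : StrictMonoOn H (Ioi 0)) (hHinf : Tendsto H atTop (𝓝 binf)) :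
    ∀ q ∈ Ioo (0 : ℝ) binf,
      Tendsto (fun p => vLevel C p q / (sInf {r : ℝ | 0 < r ∧ q ≤ H r} * p)) (𝓝[>] 0) (𝓝 1) ∧
      Tendsto (fun p => vLevel C p q) (𝓝[>] 0) (𝓝 0) := by
  rintro q ⟨hq, hqb⟩
  obtain ⟨s, hqs, hs⟩ := ((hHinf.eventually_const_lt hqb).and (eventually_gt_atTop 0)).exists
  have hHq : H (q / 2) < q :=
    (hC.tail_limit_le (half_pos hq) (hlim _ (half_pos hq))).trans_lt (half_lt_self hq)
  set r₀ := generalizedInverseOn H (Ioi 0) q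
  have hpos : 0 < r₀ :=
    (half_pos hq).trans_le (le_generalizedInverseOn hH.monotoneOn (half_pos hq) hHq hs hqs.le)
  have hdiv : Tendsto (fun p => vLevel C p q / p) (𝓝[>] 0) (𝓝 r₀) :=
    hC.tendsto_vLevel_div hlim hH (half_pos hq) hHq hs hqs
  constructor
  · have hratio := hdiv.div_const r₀
    rw [div_self hpos.ne'] at hratio
    refine hratio.congr fun p => ?_
    change vLevel C p q / p / r₀ = vLevel C p q / (r₀ * p)
    rw [div_div, mul_comm]
  · have hmul := hdiv.mul (tendsto_id.mono_left nhdsWithin_le_nhds)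
    rw [mul_zero] at hmul
    refine hmul.congr' ?_
    filter_upwards [self_mem_nhdsWithin] with p hp
    exact div_mul_cancel₀ _ (ne_of_gt hp)

/-- Tail attraction rate under strong lower tail dependence (`κ = 1`): for `q ∈ (0, b_∞)`,
`v(q|p;C) ∼ H⁻¹(q)·p → 0` as `p ↓ 0`, where `H(r) = b(1,r)` and `H⁻¹` is its inverse. -/
theorem vLevel_tail_attraction_rate (C : ℝ → ℝ → ℝ) (hC : IsCopula C)
    (b : ℝ → ℝ → ℝ) (R : ℝ → ℝ → ℝ → ℝ) (a₁ binf : ℝ)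
    (hexp : ∀ u w₁ w₂ : ℝ, 0 < u → 0 < w₁ → 0 < w₂ → u * w₁ ≤ 1 → u * w₂ ≤ 1 →
      C (u * w₁) (u * w₂) / u = b w₁ w₂ + R u w₁ w₂)
    (hR : ∀ ε > (0:ℝ), ∃ δ > (0:ℝ), ∀ u w₁ w₂ : ℝ, 0 < u → 0 < w₁ → 0 < w₂ →
      u * w₁ ≤ δ → u * w₂ ≤ δ → |R u w₁ w₂| ≤ ε)
    -- (B1): `b(1,r) = a₁ r + o(r)` as `r ↓ 0`, with `a₁ > 0`
    (ha₁ : 0 < a₁)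
    (hB1 : Tendsto (fun r => b 1 r / r) (𝓝[>] (0:ℝ)) (𝓝 a₁))
    -- (B2): `H(r) = b(1,r)` is continuous and strictly increasing on `(0,∞)`,
    -- with `H(0⁺)=0` and `H(∞)=b_∞ ∈ (0,1]`
    (hHcont : ContinuousOn (fun r => b 1 r) (Ioi (0:ℝ)))
    (hHmono : StrictMonoOn (fun r => b 1 r) (Ioi (0:ℝ)))
    (hH0 : Tendsto (fun r => b 1 r) (𝓝[>] (0:ℝ)) (𝓝 0))
    (hHinf : Tendsto (fun r => b 1 r) atTop (𝓝 binf))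
    (hbinf_mem : binf ∈ Ioc (0:ℝ) 1) :
    ∀ q ∈ Ioo (0:ℝ) binf,
      Tendsto (fun p => vLevel C p q / (sInf {r : ℝ | 0 < r ∧ q ≤ b 1 r} * p))
        (𝓝[>] (0:ℝ)) (𝓝 1) ∧
      Tendsto (fun p => vLevel C p q) (𝓝[>] (0:ℝ)) (𝓝 0) := by
  have hlim (r : ℝ) (hr : 0 < r) : Tendsto (fun p => C p (p * r) / p) (𝓝[>] 0) (𝓝 (b 1 r)) := by
    simpa only [mul_one] using tendsto_of_tail_expansion (fun u hu => hexp u 1 r hu one_pos hr)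
      (tendsto_of_uniform_tail_remainder hR one_pos hr)
  exact vLevel_tail_attraction_rate_general hC hlim hHmono hHinf
end

section
/- Let C be a bivariate copula and C²*(u,v) := u − C(u, 1−v) its 2-reflection. Assume C²* admits a lower tail expansion with tail order κ²* = 1: C²*(u·w₁, u·w₂)/u = b²*(w₁,w₂) + R(u; w₁, w₂), where R(u; w₁, w₂) → 0 uniformly as u·w₁ → 0 and u·w₂ → 0; b²*(1,r) = a₁·r + o(r) as r ↓ 0 for some a₁ > 0; and H²*(r) := b²*(1,r) is continuous and strictly increasing on (0,∞) with lim_{r↓0} H²*(r) = 0 and lim_{r→∞} H²*(r) = b_∞²* ∈ (0,1]. Then for every q ∈ (1 − b_∞²*, 1), (1 − v(q|p; C)) / ((H²*)⁻¹(1−q)·p) → 1 as p ↓ 0; in particular v(q|p; C) → 1. -/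
open Set Filter Topology

/-!
Since `C p ·` is nondecreasing, comparing `C²*(p, pr) / p` with `1 - q` decides on which side of
`1 - p * r` the level `v(q|p;C)` lies. As `p ↓ 0` this quotient tends to `H r`, so the rescaled gap
`(1 - v(q|p;C)) / p` is eventually at least every `r` with `H r < 1 - q` and at most every `r` with
`H r > 1 - q`; strict monotonicity of `H` leaves only the point `H⁻¹(1 - q)`. That point is positive
because `C²*(p, t) ≤ t` forces `H r ≤ r`.
-/

/-- The 2-reflection `C²*` of a copula `C`: the distribution function of `(U, 1 - V)` when `(U, V)`
has distribution function `C`. -/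
def reflection₂ (C : ℝ → ℝ → ℝ) (u v : ℝ) : ℝ :=
  u - C u (1 - v)

/-- The generalized inverse of a function on `(0, ∞)`. It is the ordinary inverse at values attained
by a strictly increasing function, and takes the junk value `0` at `y` when `H < y` throughout. -/
noncomputable def lowerInverse (H : ℝ → ℝ) (y : ℝ) : ℝ :=
  sInf {r : ℝ | 0 < r ∧ y ≤ H r}

section LowerInverse

variable {H : ℝ → ℝ} {y r : ℝ}

theorem lt_of_lt_lowerInverse (hr : 0 < r) (h : r < lowerInverse H y) : H r < y :=
  lt_of_not_ge fun hy => notMem_of_lt_csInf h ⟨0, fun _ hs => hs.1.le⟩ ⟨hr, hy⟩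

theorem lt_of_lowerInverse_lt (hH : StrictMonoOn H (Ioi 0)) (hne : ∃ s, 0 < s ∧ y ≤ H s)
    (h : lowerInverse H y < r) : y < H r := by
  obtain ⟨s, ⟨hs, hys⟩, hsr⟩ := exists_lt_of_csInf_lt hne h
  exact hys.trans_lt (hH hs (hs.trans hsr) hsr)

theorem le_lowerInverse_of_le_self (hH : ∀ s > 0, H s ≤ s) (hne : ∃ s, 0 < s ∧ y ≤ H s) :
    y ≤ lowerInverse H y :=
  le_csInf hne fun s hs => hs.2.trans (hH s hs.1)

end LowerInverse

theorem eventually_mul_mem_Ioc {w c : ℝ} (hw : 0 < w) (hc : 0 < c) :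
    ∀ᶠ u in 𝓝[>] (0 : ℝ), u * w ∈ Ioc 0 c := by
  filter_upwards [Ioc_mem_nhdsGT (div_pos hc hw)] with u hu
  exact ⟨mul_pos hu.1 hw, (le_div_iff₀ hw).1 hu.2⟩

theorem tendsto_div_of_tail_expansion {D b : ℝ → ℝ → ℝ} {R : ℝ → ℝ → ℝ → ℝ}
    (hexp : ∀ u w₁ w₂ : ℝ, 0 < u → 0 < w₁ → 0 < w₂ → u * w₁ ≤ 1 → u * w₂ ≤ 1 →
      D (u * w₁) (u * w₂) / u = b w₁ w₂ + R u w₁ w₂)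
    (hR : ∀ ε > (0 : ℝ), ∃ δ > (0 : ℝ), ∀ u w₁ w₂ : ℝ, 0 < u → 0 < w₁ → 0 < w₂ →
      u * w₁ ≤ δ → u * w₂ ≤ δ → |R u w₁ w₂| ≤ ε)
    {w₁ w₂ : ℝ} (hw₁ : 0 < w₁) (hw₂ : 0 < w₂) :
    Tendsto (fun u => D (u * w₁) (u * w₂) / u) (𝓝[>] 0) (𝓝 (b w₁ w₂)) := by
  have hR₀ : Tendsto (fun u => R u w₁ w₂) (𝓝[>] 0) (𝓝 0) := by
    refine Metric.nhds_basis_closedBall.tendsto_right_iff.2 fun ε hε => ?_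
    obtain ⟨δ, hδ, hRδ⟩ := hR ε hε
    filter_upwards [self_mem_nhdsWithin, eventually_mul_mem_Ioc hw₁ hδ,
      eventually_mul_mem_Ioc hw₂ hδ] with u hu hu₁ hu₂
    simpa using hRδ u w₁ w₂ hu hw₁ hw₂ hu₁.2 hu₂.2
  have hsum : Tendsto (fun u => b w₁ w₂ + R u w₁ w₂) (𝓝[>] 0) (𝓝 (b w₁ w₂)) := by
    simpa using hR₀.const_add (b w₁ w₂)
  refine hsum.congr' ?_
  filter_upwards [self_mem_nhdsWithin, eventually_mul_mem_Ioc hw₁ one_pos,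
    eventually_mul_mem_Ioc hw₂ one_pos] with u hu hu₁ hu₂
  exact (hexp u w₁ w₂ hu hw₁ hw₂ hu₁.2 hu₂.2).symm

section Copula

variable {C : ℝ → ℝ → ℝ} {H : ℝ → ℝ} {p q r t u : ℝ}

theorem IsCopula.apply_one_right (hC : IsCopula C) (hu : u ∈ Icc (0 : ℝ) 1) : C u 1 = u :=
  hC.2.2.2.1 u hu

theorem IsCopula.monotoneOn_right_s10 (hC : IsCopula C) (hu : u ∈ Icc (0 : ℝ) 1) :
    MonotoneOn (C u) (Icc 0 1) := by
  obtain ⟨-, -, hzero_left, -, -, hincr⟩ := hC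
  intro v hv w hw hvw
  have hrect := hincr 0 u v w (by simp) hu hv hw hu.1 hvw
  rw [hzero_left v hv, hzero_left w hw] at hrect
  linarith

theorem IsCopula.reflection₂_le_right (hC : IsCopula C) (hu : u ∈ Icc (0 : ℝ) 1)
    (ht : t ∈ Icc (0 : ℝ) 1) : reflection₂ C u t ≤ t := by
  have hone_right : C u 1 = u := hC.apply_one_right hu
  obtain ⟨-, -, -, -, hone_left, hincr⟩ := hC
  have ht' : 1 - t ∈ Icc (0 : ℝ) 1 := Icc.mem_iff_one_sub_mem.1 ht
  have hrect := hincr u 1 (1 - t) 1 hu (by simp) ht' (by simp) hu.2 ht'.2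
  rw [hone_left 1 (by simp), hone_left _ ht', hone_right] at hrect
  unfold reflection₂
  linarith

theorem reflection₂_div_self (hp : p ≠ 0) : reflection₂ C p t / p = 1 - C p (1 - t) / p := by
  rw [reflection₂, sub_div, div_self hp]

theorem le_one_sub_vLevel (hp : p ≠ 0) (ht : t ∈ Icc (0 : ℝ) 1)
    (h : reflection₂ C p t / p ≤ 1 - q) : t ≤ 1 - vLevel C p q := by
  rw [reflection₂_div_self hp] at h
  have hle : vLevel C p q ≤ 1 - t :=
    csInf_le ⟨0, fun _ hv => hv.1.1⟩ ⟨Icc.mem_iff_one_sub_mem.1 ht, by linarith⟩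
  linarith

theorem IsCopula.one_sub_vLevel_le (hC : IsCopula C) (hp : p ∈ Ioc (0 : ℝ) 1) (hq : q ≤ 1)
    (ht : t ∈ Icc (0 : ℝ) 1) (h : 1 - q < reflection₂ C p t / p) : 1 - vLevel C p q ≤ t := by
  rw [reflection₂_div_self hp.1.ne'] at h
  have hp' : p ∈ Icc (0 : ℝ) 1 := Ioc_subset_Icc_self hp
  have hone : q ≤ C p 1 / p := by
    rwa [hC.apply_one_right hp', div_self hp.1.ne']
  have hle : 1 - t ≤ vLevel C p q := by
    refine le_csInf ⟨1, by simp, hone⟩ fun v ⟨hv, hqv⟩ => ?_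
    by_contra! hlt
    have hmono : C p v / p ≤ C p (1 - t) / p := div_le_div_of_nonneg_right
      (hC.monotoneOn_right_s10 hp' hv (Icc.mem_iff_one_sub_mem.1 ht) hlt.le) hp.1.le
    linarith
  linarith

theorem eventually_le_one_sub_vLevel_div (hr : 0 < r)
    (h : ∀ᶠ p in 𝓝[>] 0, reflection₂ C p (p * r) / p ≤ 1 - q) :
    ∀ᶠ p in 𝓝[>] 0, r ≤ (1 - vLevel C p q) / p := by
  filter_upwards [h, self_mem_nhdsWithin, eventually_mul_mem_Ioc hr one_pos] with p hpq hp hpr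
  rw [le_div_iff₀' hp]
  exact le_one_sub_vLevel (ne_of_gt hp) (Ioc_subset_Icc_self hpr) hpq

theorem IsCopula.eventually_one_sub_vLevel_div_le (hC : IsCopula C) (hq : q ≤ 1) (hr : 0 < r)
    (h : ∀ᶠ p in 𝓝[>] 0, 1 - q < reflection₂ C p (p * r) / p) :
    ∀ᶠ p in 𝓝[>] 0, (1 - vLevel C p q) / p ≤ r := by
  filter_upwards [h, Ioc_mem_nhdsGT one_pos, eventually_mul_mem_Ioc hr one_pos] with p hpq hp hpr
  rw [div_le_iff₀' hp.1]
  exact hC.one_sub_vLevel_le hp hq (Ioc_subset_Icc_self hpr) hpq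

theorem IsCopula.le_self_of_tendsto_reflection₂_div (hC : IsCopula C) {ℓ : ℝ} (hr : 0 < r)
    (h : Tendsto (fun p => reflection₂ C p (p * r) / p) (𝓝[>] 0) (𝓝 ℓ)) : ℓ ≤ r := by
  refine le_of_tendsto h ?_
  filter_upwards [Ioc_mem_nhdsGT one_pos, eventually_mul_mem_Ioc hr one_pos] with p hp hpr
  rw [div_le_iff₀' hp.1]
  exact hC.reflection₂_le_right (Ioc_subset_Icc_self hp) (Ioc_subset_Icc_self hpr)

theorem IsCopula.tendsto_one_sub_vLevel_div (hC : IsCopula C)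
    (hlim : ∀ r > 0, Tendsto (fun p => reflection₂ C p (p * r) / p) (𝓝[>] 0) (𝓝 (H r)))
    (hq : q ≤ 1) {r₀ : ℝ} (hr₀ : 0 < r₀) (hlt : ∀ r, 0 < r → r < r₀ → H r < 1 - q)
    (hgt : ∀ r, r₀ < r → 1 - q < H r) :
    Tendsto (fun p => (1 - vLevel C p q) / p) (𝓝[>] 0) (𝓝 r₀) := by
  refine tendsto_order.2 ⟨fun a ha => ?_, fun a ha => ?_⟩
  · obtain ⟨r, har, hr⟩ := exists_between (max_lt ha hr₀)
    obtain ⟨har, hr_pos⟩ := max_lt_iff.1 har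
    have hbelow := (hlim r hr_pos).eventually_le_const (hlt r hr_pos hr)
    filter_upwards [eventually_le_one_sub_vLevel_div hr_pos hbelow] with p hp
    exact har.trans_le hp
  · obtain ⟨r, hr, hra⟩ := exists_between ha
    have hr_pos : 0 < r := hr₀.trans hr
    have habove := (hlim r hr_pos).eventually_const_lt (hgt r hr)
    filter_upwards [hC.eventually_one_sub_vLevel_div_le hq hr_pos habove] with p hp
    exact hp.trans_lt hra

end Copula

theorem tendsto_one_of_tendsto_one_sub_div {f : ℝ → ℝ} {ℓ : ℝ}
    (hf : Tendsto (fun p => (1 - f p) / p) (𝓝[>] 0) (𝓝 ℓ)) : Tendsto f (𝓝[>] 0) (𝓝 1) := by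
  have hid : Tendsto (fun p : ℝ => p) (𝓝[>] 0) (𝓝 0) := tendsto_id.mono_left nhdsWithin_le_nhds
  have hprod : Tendsto (fun p => 1 - (1 - f p) / p * p) (𝓝[>] 0) (𝓝 1) := by
    simpa using (hf.mul hid).const_sub 1
  refine hprod.congr' ?_
  filter_upwards [self_mem_nhdsWithin] with p hp
  rw [div_mul_cancel₀ _ (ne_of_gt hp), sub_sub_cancel]

theorem vLevel_tail_repulsion_rate_general {C : ℝ → ℝ → ℝ} (hC : IsCopula C) {H : ℝ → ℝ}
    (hlim : ∀ r > 0, Tendsto (fun p => reflection₂ C p (p * r) / p) (𝓝[>] 0) (𝓝 (H r)))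
    (hmono : StrictMonoOn H (Ioi 0)) {Hinf : ℝ} (hHinf : Tendsto H atTop (𝓝 Hinf))
    {q : ℝ} (hq : q ∈ Ioo (1 - Hinf) 1) :
    Tendsto (fun p => (1 - vLevel C p q) / (lowerInverse H (1 - q) * p)) (𝓝[>] 0) (𝓝 1) ∧
      Tendsto (fun p => vLevel C p q) (𝓝[>] 0) (𝓝 1) := by
  have hne : ∃ s, 0 < s ∧ 1 - q ≤ H s :=
    ((eventually_gt_atTop 0).and (hHinf.eventually_const_le (by linarith [hq.1]))).exists
  have hle_self : ∀ r > 0, H r ≤ r := fun r hr =>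
    hC.le_self_of_tendsto_reflection₂_div hr (hlim r hr)
  have hpos : 0 < lowerInverse H (1 - q) :=
    (sub_pos.2 hq.2).trans_le (le_lowerInverse_of_le_self hle_self hne)
  have hrate : Tendsto (fun p => (1 - vLevel C p q) / p) (𝓝[>] 0) (𝓝 (lowerInverse H (1 - q))) :=
    hC.tendsto_one_sub_vLevel_div hlim hq.2.le hpos (fun _ => lt_of_lt_lowerInverse)
      fun _ => lt_of_lowerInverse_lt hmono hne
  refine ⟨?_, tendsto_one_of_tendsto_one_sub_div hrate⟩
  simpa only [div_div, mul_comm, div_self hpos.ne'] using hrate.div_const (lowerInverse H (1 - q))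

/-- Tail repulsion rate: if the 2-reflected copula `C²*(u,v) = u − C(u,1−v)` has strong
lower tail dependence (`κ²* = 1`) with tail dependence function `b²*` and
`H²*(r) = b²*(1,r)` continuous, strictly increasing, with limits `0` at `0` and
`b_∞²* ∈ (0,1]` at `∞`, then for `q ∈ (1−b_∞²*, 1)`,
`1 − v(q|p;C) ∼ (H²*)⁻¹(1−q)·p`, so `v(q|p;C) → 1`. -/
theorem vLevel_tail_repulsion_rate (C : ℝ → ℝ → ℝ) (hC : IsCopula C)
    (b2 : ℝ → ℝ → ℝ) (R : ℝ → ℝ → ℝ → ℝ) (a₁ binf2 : ℝ)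
    (hexp : ∀ u w₁ w₂ : ℝ, 0 < u → 0 < w₁ → 0 < w₂ → u * w₁ ≤ 1 → u * w₂ ≤ 1 →
      (u * w₁ - C (u * w₁) (1 - u * w₂)) / u = b2 w₁ w₂ + R u w₁ w₂)
    (hR : ∀ ε > (0:ℝ), ∃ δ > (0:ℝ), ∀ u w₁ w₂ : ℝ, 0 < u → 0 < w₁ → 0 < w₂ →
      u * w₁ ≤ δ → u * w₂ ≤ δ → |R u w₁ w₂| ≤ ε)
    (ha₁ : 0 < a₁)
    (hB1 : Tendsto (fun r => b2 1 r / r) (𝓝[>] (0:ℝ)) (𝓝 a₁))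
    (hHcont : ContinuousOn (fun r => b2 1 r) (Ioi (0:ℝ)))
    (hHmono : StrictMonoOn (fun r => b2 1 r) (Ioi (0:ℝ)))
    (hH0 : Tendsto (fun r => b2 1 r) (𝓝[>] (0:ℝ)) (𝓝 0))
    (hHinf : Tendsto (fun r => b2 1 r) atTop (𝓝 binf2))
    (hbinf_mem : binf2 ∈ Ioc (0:ℝ) 1) :
    ∀ q ∈ Ioo (1 - binf2) (1:ℝ),
      Tendsto (fun p => (1 - vLevel C p q) / (sInf {r : ℝ | 0 < r ∧ 1 - q ≤ b2 1 r} * p))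
        (𝓝[>] (0:ℝ)) (𝓝 1) ∧
      Tendsto (fun p => vLevel C p q) (𝓝[>] (0:ℝ)) (𝓝 1) := by
  intro q hq
  refine vLevel_tail_repulsion_rate_general hC (fun r hr => ?_) hHmono hHinf hq
  simpa only [mul_one] using
    tendsto_div_of_tail_expansion (D := reflection₂ C) hexp hR one_pos hr
end

section
/- Let C be a bivariate copula and suppose A : (0,1) → [0,1] satisfies C(p,v)/p → A(v) as p ↓ 0 for every v ∈ (0,1), with locally uniform convergence on (0,1). If lim_{v↓0} A(v) > 0, then v(p; C) → 0 as p ↓ 0. -/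
open Set Filter Topology

/-! At a level `v` with `A v > 0`, the section `p ↦ C p v` behaves like `A v * p` as `p ↓ 0`, so it
exceeds `p ^ 2` for small `p` and hence `vDiag C p ≤ v`; such `v` exist arbitrarily close to `0`. -/

lemma eventually_sq_lt_of_tendsto_div {𝕜 : Type*} [Field 𝕜] [LinearOrder 𝕜]
    [IsStrictOrderedRing 𝕜] [TopologicalSpace 𝕜] [OrderClosedTopology 𝕜] {f : 𝕜 → 𝕜} {a : 𝕜}
    (hf : Tendsto (fun p => f p / p) (𝓝[>] 0) (𝓝 a)) (ha : 0 < a) :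
    ∀ᶠ p in 𝓝[>] (0 : 𝕜), p ^ 2 < f p := by
  have hid : Tendsto (fun p : 𝕜 => p) (𝓝[>] 0) (𝓝 0) := tendsto_id.mono_left nhdsWithin_le_nhds
  filter_upwards [hid.eventually_lt hf ha, self_mem_nhdsWithin] with p hlt hp
  rwa [sq, ← lt_div_iff₀ hp]

lemma vDiag_nonneg (C : ℝ → ℝ → ℝ) (p : ℝ) : 0 ≤ vDiag C p :=
  Real.sInf_nonneg fun _ hv => hv.1.1

section DiagonalLevel

variable {C : ℝ → ℝ → ℝ}

lemma vDiag_le {p v : ℝ} (hv : v ∈ Icc (0 : ℝ) 1) (hC : p ^ 2 ≤ C p v) : vDiag C p ≤ v :=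
  csInf_le ⟨0, fun _ hw => hw.1.1⟩ ⟨hv, hC⟩

lemma tendsto_vDiag_zero_of_frequently {l : Filter ℝ}
    (hC : ∃ᶠ v in 𝓝[>] (0 : ℝ), ∀ᶠ p in l, p ^ 2 ≤ C p v) : Tendsto (vDiag C) l (𝓝 0) := by
  refine tendsto_order.2 ⟨fun b hb => .of_forall fun p => hb.trans_le (vDiag_nonneg C p),
    fun ε hε => ?_⟩
  obtain ⟨v, hCv, hv_pos, hv_lt⟩ :=
    (hC.and_eventually (Ioo_mem_nhdsGT (lt_min hε one_pos))).exists
  obtain ⟨hvε, hv1⟩ := lt_min_iff.1 hv_lt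
  filter_upwards [hCv] with p hp
  exact (vDiag_le ⟨hv_pos.le, hv1.le⟩ hp).trans_lt hvε

theorem vDiag_tendsto_zero_of_mass_at_zero_general {A : ℝ → ℝ}
    (hA : ∀ v ∈ Ioo (0 : ℝ) 1, Tendsto (fun p => C p v / p) (𝓝[>] 0) (𝓝 (A v)))
    (hA_pos : ∃ᶠ v in 𝓝[>] (0 : ℝ), 0 < A v) : Tendsto (vDiag C) (𝓝[>] 0) (𝓝 0) := by
  refine tendsto_vDiag_zero_of_frequently ?_
  refine (hA_pos.and_eventually (Ioo_mem_nhdsGT one_pos)).mono fun v ⟨hAv, hv⟩ => ?_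
  exact (eventually_sq_lt_of_tendsto_div (hA v hv) hAv).mono fun _ => le_of_lt

end DiagonalLevel

/-- If the limiting conditional cdf `A` has positive mass at `0`, then the diagonal
copula-adjusted level satisfies `v(p;C) → 0` as `p ↓ 0`. -/
theorem vDiag_tendsto_zero_of_mass_at_zero (C : ℝ → ℝ → ℝ) (hC : IsCopula C)
    (A : ℝ → ℝ) (p₀ : ℝ)
    (hArange : ∀ v ∈ Ioo (0:ℝ) 1, A v ∈ Icc (0:ℝ) 1)
    (hA : ∀ v ∈ Ioo (0:ℝ) 1, Tendsto (fun p => C p v / p) (𝓝[>] (0:ℝ)) (𝓝 (A v)))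
    (hunif : ∀ a b : ℝ, 0 < a → a < b → b < 1 →
      TendstoUniformlyOn (fun p v => C p v / p) A (𝓝[>] (0:ℝ)) (Icc a b))
    (hp₀ : Tendsto A (𝓝[>] (0:ℝ)) (𝓝 p₀))
    (hp₀pos : 0 < p₀) :
    Tendsto (fun p => vDiag C p) (𝓝[>] (0:ℝ)) (𝓝 0) :=
  vDiag_tendsto_zero_of_mass_at_zero_general hA (hp₀.eventually_const_lt hp₀pos).frequently
end
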